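/- Let ε > 0, k > 0, a < b, let M be a positive even integer with grid points x_j = a + j(b-a)/M for j = 0,…,M-1, let V : ℝ → ℝ, and set μ_l = 2πl/(b-a) for -M/2 ≤ l ≤ M/2-1. Given Ψⁿ ∈ ℂ^M, define the discrete Fourier coefficients Ψ̂ⁿ_l = Σ_{j=0}^{M-1} Ψⁿ_j exp(-i μ_l (x_j - a)), the intermediate values Ψ*_j = (1/M) Σ_{l=-M/2}^{M/2-1} exp(-i ε k μ_l²/2) Ψ̂ⁿ_l exp(i μ_l (x_j - a)), and the update Ψ^{n+1}_j = exp(-i V(x_j) k/ε) Ψ*_j. Then the scheme conserves the discrete l² norm: Σ_{j=0}^{M-1} |Ψ^{n+1}_j|² = Σ_{j=0}^{M-1} |Ψⁿ_j|². -/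

import Mathlib

open Complex Finset

/-!
Identify both the grid indices and the frequencies with `ZMod M`. One step of the scheme is then a
Fourier multiplier `𝓕⁻ ∘ m ∘ 𝓕` followed by pointwise multiplication by a phase. The discrete
Fourier transform is an isometry up to the factor `√M`, because its adjoint is its reflection
`Ψ ↦ (j ↦ 𝓕 Ψ (-j))`, which the inversion formula shows to be `M` times its inverse. Unimodular
multipliers on either side therefore leave the `l²` norm unchanged.
-/

section Residues

variable {N : ℕ}

theorem bijOn_natCast_range [NeZero N] :
    Set.BijOn (Nat.cast : ℕ → ZMod N) (range N) Set.univ := by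
  refine ⟨Set.mapsTo_univ _ _, fun i hi j hj hij ↦ ?_, fun z _ ↦ ?_⟩
  · rw [coe_range, Set.mem_Iio] at hi hj
    rwa [ZMod.natCast_eq_natCast_iff', Nat.mod_eq_of_lt hi, Nat.mod_eq_of_lt hj] at hij
  · exact ⟨z.val, by simpa using z.val_lt, ZMod.natCast_zmod_val z⟩

theorem bijOn_intCast_Icc [NeZero N] {m n : ℤ} (hmn : n + 1 - m = N) :
    Set.BijOn (Int.cast : ℤ → ZMod N) (Icc m n) Set.univ := by
  have injOn : Set.InjOn (Int.cast : ℤ → ZMod N) (Icc m n) := by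
    intro i hi j hj hij
    rw [coe_Icc, Set.mem_Icc] at hi hj
    rw [ZMod.intCast_eq_intCast_iff_dvd_sub] at hij
    have := Int.eq_zero_of_abs_lt_dvd hij (abs_lt.mpr ⟨by omega, by omega⟩)
    omega
  refine ⟨Set.mapsTo_univ _ _, injOn, ?_⟩
  rw [← coe_univ]
  exact surjOn_of_injOn_of_card_le _ (fun _ _ ↦ mem_univ _) injOn (by simp [hmn])

theorem sum_comp_eq_sum_univ_of_bijOn {ι κ A : Type*} [Fintype κ] [AddCommMonoid A]
    {s : Finset ι} {e : ι → κ} (he : Set.BijOn e s Set.univ) (f : κ → A) :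
    ∑ i ∈ s, f (e i) = ∑ k, f k :=
  sum_nbij e (fun _ _ ↦ mem_univ _) he.injOn (by simpa using he.surjOn) fun _ _ ↦ rfl

theorem sum_range_natCast_eq_sum_univ [NeZero N] {A : Type*} [AddCommMonoid A] (f : ZMod N → A) :
    ∑ j ∈ range N, f j = ∑ z, f z :=
  sum_comp_eq_sum_univ_of_bijOn bijOn_natCast_range f

end Residues

section DiscreteFourier

open ZMod
open scoped InnerProductSpace

variable {N : ℕ} [NeZero N] {E : Type*} [SeminormedAddCommGroup E] [InnerProductSpace ℂ E]

theorem sum_inner_dft_left (Φ Ψ : ZMod N → E) :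
    ∑ k, ⟪𝓕 Φ k, Ψ k⟫_ℂ = ∑ j, ⟪Φ j, 𝓕 Ψ (-j)⟫_ℂ := by
  simp only [dft_apply, sum_inner, inner_sum, inner_smul_left, inner_smul_right,
    ← AddChar.map_neg_eq_conj, neg_neg, mul_neg]
  rw [sum_comm]
  simp only [mul_comm]

theorem sum_inner_dft_dft (Φ Ψ : ZMod N → E) :
    ∑ k, ⟪𝓕 Φ k, 𝓕 Ψ k⟫_ℂ = N * ∑ j, ⟪Φ j, Ψ j⟫_ℂ := by
  simp only [sum_inner_dft_left, dft_dft, neg_neg, inner_smul_right, mul_sum]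

theorem sum_norm_sq_dft (Φ : ZMod N → E) :
    ∑ k, ‖𝓕 Φ k‖ ^ 2 = N * ∑ j, ‖Φ j‖ ^ 2 := by
  have plancherel := sum_inner_dft_dft Φ Φ
  simp only [inner_self_eq_norm_sq_to_K, coe_algebraMap] at plancherel
  exact_mod_cast plancherel

theorem sum_norm_sq_invDFT_smul_dft {m : ZMod N → ℂ} (hm : ∀ k, ‖m k‖ = 1) (Φ : ZMod N → E) :
    ∑ j, ‖𝓕⁻ (fun k ↦ m k • 𝓕 Φ k) j‖ ^ 2 = ∑ j, ‖Φ j‖ ^ 2 := by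
  have hN : (N : ℝ) ≠ 0 := NeZero.ne _
  refine mul_left_cancel₀ hN ?_
  rw [← sum_norm_sq_dft, ← sum_norm_sq_dft, LinearEquiv.apply_symm_apply]
  simp only [norm_smul, hm, one_mul]

theorem sum_range_norm_sq_unimodular_multiplier {s : Finset ℤ}
    (hs : Set.BijOn (Int.cast : ℤ → ZMod N) s Set.univ) {m : ℤ → ℂ} (hm : ∀ l ∈ s, ‖m l‖ = 1)
    (ψ : ℕ → E) :
    ∑ j ∈ range N, ‖(N : ℂ)⁻¹ • ∑ l ∈ s, stdAddChar (l * j : ZMod N) • m l •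
      ∑ i ∈ range N, stdAddChar (-(i * l) : ZMod N) • ψ i‖ ^ 2 = ∑ j ∈ range N, ‖ψ j‖ ^ 2 := by
  let Φ : ZMod N → E := fun z ↦ ψ z.val
  -- `m` need not be `N`-periodic, so it descends to `ZMod N` only through representatives in `s`.
  let m' : ZMod N → ℂ := m ∘ Function.invFunOn Int.cast s
  have Φ_natCast : ∀ j ∈ range N, Φ j = ψ j := fun j hj ↦
    congrArg ψ (val_cast_of_lt (mem_range.mp hj))
  have m'_intCast : ∀ l ∈ s, m' l = m l := fun l hl ↦
    congrArg m (hs.injOn.leftInvOn_invFunOn hl)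
  have norm_m' (z : ZMod N) : ‖m' z‖ = 1 := hm _ (hs.surjOn.mapsTo_invFunOn (Set.mem_univ z))
  have forward (l : ℤ) : ∑ i ∈ range N, stdAddChar (-(i * l) : ZMod N) • ψ i = 𝓕 Φ l := by
    rw [dft_apply, ← sum_range_natCast_eq_sum_univ]
    exact sum_congr rfl fun i hi ↦ by rw [Φ_natCast i hi]
  have backward (j : ℕ) : (N : ℂ)⁻¹ • ∑ l ∈ s, stdAddChar (l * j : ZMod N) • m l • 𝓕 Φ l =
      𝓕⁻ (fun k ↦ m' k • 𝓕 Φ k) j := by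
    rw [invDFT_apply, ← sum_comp_eq_sum_univ_of_bijOn hs]
    congr 1
    exact sum_congr rfl fun l hl ↦ by rw [m'_intCast l hl]
  simp only [forward, backward]
  calc ∑ j ∈ range N, ‖𝓕⁻ (fun k ↦ m' k • 𝓕 Φ k) j‖ ^ 2
      = ∑ z, ‖𝓕⁻ (fun k ↦ m' k • 𝓕 Φ k) z‖ ^ 2 :=
        sum_range_natCast_eq_sum_univ fun z ↦ ‖𝓕⁻ (fun k ↦ m' k • 𝓕 Φ k) z‖ ^ 2
    _ = ∑ z, ‖Φ z‖ ^ 2 := sum_norm_sq_invDFT_smul_dft norm_m' Φ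
    _ = ∑ j ∈ range N, ‖Φ j‖ ^ 2 := (sum_range_natCast_eq_sum_univ fun z ↦ ‖Φ z‖ ^ 2).symm
    _ = ∑ j ∈ range N, ‖ψ j‖ ^ 2 := sum_congr rfl fun j hj ↦ by rw [Φ_natCast j hj]

end DiscreteFourier

theorem exp_I_mul_wavenumber_mul_node {N : ℕ} [NeZero N] {L : ℝ} (hL : L ≠ 0) (l : ℤ) (j : ℕ) :
    exp (I * (2 * Real.pi * l / L : ℝ) * (j * (L / N) : ℝ)) =
      ZMod.stdAddChar (l * j : ZMod N) := by
  have hN : (N : ℂ) ≠ 0 := NeZero.ne _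
  have hL' : (L : ℂ) ≠ 0 := ofReal_ne_zero.mpr hL
  have cast : (l * j : ZMod N) = ((l * j : ℤ) : ZMod N) := by push_cast; rfl
  rw [cast, ZMod.stdAddChar_coe]
  congr 1
  push_cast
  field_simp

open ZMod in
/-- Here `m` and `p` stand for the kinetic phases `exp (-iεkμ_l²/2)` and the potential phases
`exp (-iV(x_j)k/ε)`, and `s` for the frequency window `-M/2 ≤ l ≤ M/2 - 1`. -/
theorem tssp_conserves_discrete_l2_norm_general
    {a b : ℝ} (hab : a ≠ b) {M : ℕ} [NeZero M]
    {s : Finset ℤ} (hs : Set.BijOn (Int.cast : ℤ → ZMod M) s Set.univ)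
    {m : ℤ → ℂ} (hm : ∀ l ∈ s, ‖m l‖ = 1)
    {p : ℕ → ℂ} (hp : ∀ j ∈ range M, ‖p j‖ = 1)
    {μ : ℤ → ℝ} (hμ : ∀ l : ℤ, μ l = 2 * Real.pi * l / (b - a))
    {x : ℕ → ℝ} (hx : ∀ j : ℕ, x j = a + j * ((b - a) / M))
    {Ψn Ψstar Ψnp1 : ℕ → ℂ} {Ψhat : ℤ → ℂ}
    (hΨhat : ∀ l : ℤ, Ψhat l = ∑ j ∈ range M, Ψn j * exp (-I * (μ l : ℝ) * (x j - a : ℝ)))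
    (hΨstar : ∀ j : ℕ, Ψstar j =
      (1 / (M : ℂ)) * ∑ l ∈ s, m l * Ψhat l * exp (I * (μ l : ℝ) * (x j - a : ℝ)))
    (hΨnp1 : ∀ j : ℕ, Ψnp1 j = p j * Ψstar j) :
    ∑ j ∈ range M, ‖Ψnp1 j‖ ^ 2 = ∑ j ∈ range M, ‖Ψn j‖ ^ 2 := by
  have phase (l : ℤ) (j : ℕ) :
      exp (I * (μ l : ℝ) * (x j - a : ℝ)) = stdAddChar (l * j : ZMod M) := by
    rw [hμ, hx, add_sub_cancel_left, exp_I_mul_wavenumber_mul_node (sub_ne_zero.mpr hab.symm)]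
  have phase_neg (l : ℤ) (j : ℕ) :
      exp (-I * (μ l : ℝ) * (x j - a : ℝ)) = stdAddChar (-(j * l) : ZMod M) := by
    rw [neg_mul, neg_mul, exp_neg, phase, AddChar.map_neg_eq_inv, mul_comm]
  have Ψstar_eq (j : ℕ) : Ψstar j = (M : ℂ)⁻¹ • ∑ l ∈ s, stdAddChar (l * j : ZMod M) • m l •
      ∑ i ∈ range M, stdAddChar (-(i * l) : ZMod M) • Ψn i := by
    simp only [hΨstar, hΨhat, phase, phase_neg, smul_eq_mul, one_div]
    simp only [mul_comm]
  have norm_Ψnp1 : ∀ j ∈ range M, ‖Ψnp1 j‖ ^ 2 = ‖Ψstar j‖ ^ 2 := fun j hj ↦ by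
    rw [hΨnp1, norm_mul, hp j hj, one_mul]
  rw [sum_congr rfl norm_Ψnp1]
  simp only [Ψstar_eq]
  exact sum_range_norm_sq_unimodular_multiplier hs hm Ψn

/-- The first-order time-splitting spectral (TSSP) scheme for the semiclassical
Schrödinger equation conserves the discrete `l²` norm:
`Σ_j |Ψ^{n+1}_j|² = Σ_j |Ψⁿ_j|²`. -/
theorem tssp_conserves_discrete_l2_norm
    (ε k a b : ℝ) (hε : 0 < ε) (hk : 0 < k) (hab : a < b)
    (M : ℕ) (hM : 0 < M) (hMeven : Even M)
    (V : ℝ → ℝ)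
    (μ : ℤ → ℝ) (hμ : ∀ l : ℤ, μ l = 2 * Real.pi * l / (b - a))
    (x : ℕ → ℝ) (hx : ∀ j : ℕ, x j = a + j * ((b - a) / M))
    (Ψn Ψstar Ψnp1 : ℕ → ℂ) (Ψhat : ℤ → ℂ)
    -- discrete Fourier coefficients Ψ̂ⁿ_l = Σ_{j<M} Ψⁿ_j exp(-i μ_l (x_j - a))
    (hΨhat : ∀ l : ℤ, Ψhat l = ∑ j ∈ Finset.range M,
      Ψn j * Complex.exp (-Complex.I * ((μ l : ℝ) : ℂ) * ((x j - a : ℝ) : ℂ)))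
    -- intermediate values
    -- Ψ*_j = (1/M) Σ_{l=-M/2}^{M/2-1} exp(-iεk μ_l²/2) Ψ̂ⁿ_l exp(i μ_l (x_j - a))
    (hΨstar : ∀ j : ℕ, Ψstar j = (1 / (M : ℂ)) *
      ∑ l ∈ Finset.Icc (-(M : ℤ) / 2) ((M : ℤ) / 2 - 1),
        Complex.exp (-Complex.I * (ε : ℂ) * (k : ℂ) * ((μ l : ℝ) : ℂ) ^ 2 / 2) *
          Ψhat l * Complex.exp (Complex.I * ((μ l : ℝ) : ℂ) * ((x j - a : ℝ) : ℂ)))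
    -- update Ψ^{n+1}_j = exp(-i V(x_j) k/ε) Ψ*_j
    (hΨnp1 : ∀ j : ℕ, Ψnp1 j =
      Complex.exp (-Complex.I * ((V (x j) : ℝ) : ℂ) * (k : ℂ) / (ε : ℂ)) * Ψstar j) :
    ∑ j ∈ Finset.range M, ‖Ψnp1 j‖ ^ 2 = ∑ j ∈ Finset.range M, ‖Ψn j‖ ^ 2 := by
  have : NeZero M := ⟨hM.ne'⟩
  exact tssp_conserves_discrete_l2_norm_general hab.ne (bijOn_intCast_Icc (by omega))
    (fun l _ ↦ by simp [norm_exp, ← ofReal_pow]) (fun j _ ↦ by simp [norm_exp])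
    hμ hx hΨhat hΨstar hΨnp1
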